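/- Fix R > 0 and a ∈ (0,1]. For each n, let σₙ be the uniform (normalized surface) probability measure on the sphere {x ∈ ℝⁿ : ‖x‖ = R}, and let Sₙ : ℝⁿ → ℝ be the partial-sum map Sₙ(x) = x₁ + x₂ + ⋯ + x_{⌊na⌋}. Then the pushforward measures (Sₙ)_*σₙ converge weakly, as n → ∞, to the Gaussian measure on ℝ with mean 0 and variance aR². -/

import Mathlib

open MeasureTheory ProbabilityTheory Filter

/-!
The characteristic function of a rotation-invariant measure `μ` on an `n`-dimensional space is
radial. Averaging it over the vectors `s • g`, with `g` a standard Gaussian vector and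
`s = ‖u‖ / √n`, gives exactly `∫ exp (-s² ‖x‖² / 2) ∂μ`, because the characteristic function of a
Gaussian is Gaussian. On the other hand `‖g‖` is within `O(1)` of `√n` on average, and the radial
profile of `charFun μ` is Lipschitz with constant `√(∫ ‖x‖² ∂μ / n)`, so that the average is also
close to `charFun μ u`. When `μ` lives on the sphere of radius `R` and `‖u‖² ~ n v`, this says that
`charFun μ (t • u)` is close to `exp (-t² v R² / 2)`, and Lévy's convergence theorem applies.
-/

namespace LevySphere

open Module (finrank)
open scoped NNReal Topology RealInnerProductSpace

section ProbabilityMeasure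

variable {Ω : Type*} [MeasurableSpace Ω] {P : Measure Ω}

lemma integral_abs_le_sqrt_integral_sq [IsProbabilityMeasure P] {X : Ω → ℝ} (hX : MemLp X 2 P) :
    ∫ ω, |X ω| ∂P ≤ √(∫ ω, X ω ^ 2 ∂P) := by
  have hvar := variance_nonneg |X| P
  rw [variance_eq_sub hX.abs] at hvar
  refine Real.le_sqrt_of_sq_le ?_
  simpa only [Pi.pow_apply, Pi.abs_apply, sq_abs, sub_nonneg] using hvar

end ProbabilityMeasure

section CharFun

variable {E : Type*} [NormedAddCommGroup E] [InnerProductSpace ℝ E] [MeasurableSpace E]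
  [BorelSpace E] {μ ν : Measure E}

lemma charFun_map_inner (u : E) (t : ℝ) :
    charFun (μ.map fun x ↦ ⟪u, x⟫) t = charFun μ (t • u) := by
  rw [charFun_apply_real, integral_map (by fun_prop) (by fun_prop), charFun_apply]
  simp only [inner_smul_right, real_inner_comm, Complex.ofReal_mul]

lemma integral_charFun_smul_comm [SecondCountableTopology E] [IsFiniteMeasure μ]
    [IsFiniteMeasure ν] (s : ℝ) :
    ∫ y, charFun μ (s • y) ∂ν = ∫ x, charFun ν (s • x) ∂μ := by
  simp only [charFun_apply]
  rw [integral_integral_swap]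
  · simp only [inner_smul_right, real_inner_comm]
  · refine Integrable.of_bound (by fun_prop) 1 (ae_of_all _ fun p ↦ ?_)
    exact (Complex.norm_exp_ofReal_mul_I _).le

lemma norm_charFun_sub_charFun_le [IsFiniteMeasure μ] (hμ : MemLp id 1 μ) (u v : E) :
    ‖charFun μ u - charFun μ v‖ ≤ ∫ x, |⟪u - v, x⟫| ∂μ := by
  have hint (w : E) : Integrable (fun x ↦ Complex.exp (⟪x, w⟫ * Complex.I)) μ :=
    .of_bound (by fun_prop) 1 (ae_of_all _ fun x ↦ (Complex.norm_exp_ofReal_mul_I _).le)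
  rw [charFun_apply, charFun_apply, ← integral_sub (hint u) (hint v)]
  refine norm_integral_le_of_norm_le ((hμ.const_inner (u - v)).integrable le_rfl).abs
    (ae_of_all _ fun x ↦ ?_)
  calc ‖Complex.exp (⟪x, u⟫ * Complex.I) - Complex.exp (⟪x, v⟫ * Complex.I)‖
      = ‖Complex.exp (⟪x, v⟫ * Complex.I) * (Complex.exp (Complex.I * ⟪u - v, x⟫) - 1)‖ := by
        rw [mul_sub, mul_one, ← Complex.exp_add, inner_sub_left, real_inner_comm x u,
          real_inner_comm x v]
        push_cast
        ring_nf
    _ ≤ |⟪u - v, x⟫| := by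
        rw [norm_mul, Complex.norm_exp_ofReal_mul_I, one_mul]
        exact Real.norm_exp_I_mul_ofReal_sub_one_le

end CharFun

section RotationInvariant

variable {E : Type*} [NormedAddCommGroup E] [InnerProductSpace ℝ E] [MeasurableSpace E]

/-- A measure on a real inner product space is rotation-invariant if all linear isometries of the
space, including those reversing orientation, preserve it. -/
def IsRotationInvariant (μ : Measure E) : Prop :=
  ∀ O : E ≃ₗᵢ[ℝ] E, μ.map O = μ

namespace IsRotationInvariant

variable [BorelSpace E] {μ : Measure E} {u v : E}

lemma integral_comp_inner_eq {F : Type*} [NormedAddCommGroup F] [NormedSpace ℝ F]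
    (hμ : IsRotationInvariant μ) (huv : ‖u‖ = ‖v‖) (f : ℝ → F) :
    ∫ x, f ⟪u, x⟫ ∂μ = ∫ x, f ⟪v, x⟫ ∂μ := by
  let O : E ≃ₗᵢ[ℝ] E := (ℝ ∙ (u - v))ᗮ.reflection
  have hO : O u = v := Submodule.reflection_sub huv
  calc ∫ x, f ⟪u, x⟫ ∂μ = ∫ x, f ⟪O u, O x⟫ ∂μ := by simp only [O.inner_map_map]
    _ = ∫ x, f ⟪v, x⟫ ∂(μ.map O) := by
      rw [hO]
      exact (O.toHomeomorph.measurableEmbedding.integral_map fun x ↦ f ⟪v, x⟫).symm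
    _ = ∫ x, f ⟪v, x⟫ ∂μ := by rw [hμ O]

lemma charFun_eq_of_norm_eq (hμ : IsRotationInvariant μ) (huv : ‖u‖ = ‖v‖) :
    charFun μ u = charFun μ v := by
  simp only [charFun_apply, real_inner_comm u, real_inner_comm v]
  exact hμ.integral_comp_inner_eq huv fun r ↦ Complex.exp (r * Complex.I)

variable [FiniteDimensional ℝ E]

lemma finrank_mul_integral_inner_sq (hμ : IsRotationInvariant μ) (hmem : MemLp id 2 μ)
    (hu : ‖u‖ = 1) : finrank ℝ E * ∫ x, ⟪u, x⟫ ^ 2 ∂μ = ∫ x, ‖x‖ ^ 2 ∂μ := by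
  let b := stdOrthonormalBasis ℝ E
  have hcoord (i) : ∫ x, ⟪b i, x⟫ ^ 2 ∂μ = ∫ x, ⟪u, x⟫ ^ 2 ∂μ :=
    hμ.integral_comp_inner_eq (by rw [b.norm_eq_one, hu]) (· ^ 2)
  calc finrank ℝ E * ∫ x, ⟪u, x⟫ ^ 2 ∂μ = ∑ i, ∫ x, ⟪b i, x⟫ ^ 2 ∂μ := by simp [hcoord]
    _ = ∫ x, ∑ i, ⟪b i, x⟫ ^ 2 ∂μ :=
      (integral_finsetSum _ fun i _ ↦ (hmem.const_inner (b i)).integrable_sq).symm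
    _ = ∫ x, ‖x‖ ^ 2 ∂μ := by simp only [b.sum_sq_inner_right]

lemma integral_abs_inner_le [IsProbabilityMeasure μ] (hμ : IsRotationInvariant μ)
    (hmem : MemLp id 2 μ) (hu : ‖u‖ = 1) :
    ∫ x, |⟪u, x⟫| ∂μ ≤ √((∫ x, ‖x‖ ^ 2 ∂μ) / finrank ℝ E) := by
  have : Nontrivial E := nontrivial_of_ne u 0 (norm_ne_zero_iff.mp (hu ▸ one_ne_zero))
  rw [← hμ.finrank_mul_integral_inner_sq hmem hu,
    mul_div_cancel_left₀ _ (Nat.cast_ne_zero.mpr Module.finrank_pos.ne')]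
  exact integral_abs_le_sqrt_integral_sq (hmem.const_inner u)

lemma norm_charFun_sub_charFun_le [Nontrivial E] [IsProbabilityMeasure μ]
    (hμ : IsRotationInvariant μ) (hmem : MemLp id 2 μ) (u v : E) :
    ‖charFun μ u - charFun μ v‖ ≤ |‖u‖ - ‖v‖| * √((∫ x, ‖x‖ ^ 2 ∂μ) / finrank ℝ E) := by
  obtain ⟨e, he⟩ := exists_norm_eq E zero_le_one
  have hnorm (w : E) : ‖w‖ = ‖‖w‖ • e‖ := by simp [norm_smul, he]
  calc ‖charFun μ u - charFun μ v‖ = ‖charFun μ (‖u‖ • e) - charFun μ (‖v‖ • e)‖ := by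
        rw [hμ.charFun_eq_of_norm_eq (hnorm u), hμ.charFun_eq_of_norm_eq (hnorm v)]
    _ ≤ ∫ x, |⟪‖u‖ • e - ‖v‖ • e, x⟫| ∂μ :=
        LevySphere.norm_charFun_sub_charFun_le (hmem.mono_exponent one_le_two) _ _
    _ = |‖u‖ - ‖v‖| * ∫ x, |⟪e, x⟫| ∂μ := by
        simp only [← sub_smul, real_inner_smul_left, abs_mul, integral_const_mul]
    _ ≤ |‖u‖ - ‖v‖| * √((∫ x, ‖x‖ ^ 2 ∂μ) / finrank ℝ E) := by
        gcongr
        exact hμ.integral_abs_inner_le hmem he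

end IsRotationInvariant

end RotationInvariant

section StdGaussian

lemma integral_sq_gaussianReal (v : ℝ≥0) : ∫ y, y ^ 2 ∂(gaussianReal 0 v) = v := by
  simpa using (variance_of_integral_eq_zero (by fun_prop)
    (integral_id_gaussianReal (μ := 0) (v := v))).symm

lemma memLp_norm_sq_of_isGaussian {F : Type*} [NormedAddCommGroup F] [NormedSpace ℝ F]
    [MeasurableSpace F] [BorelSpace F] [CompleteSpace F] [SecondCountableTopology F] (γ : Measure F)
    [IsGaussian γ] : MemLp (fun x ↦ ‖x‖ ^ 2) 2 γ := by
  rw [memLp_two_iff_integrable_sq (by fun_prop)]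
  simpa only [← pow_mul, id] using (IsGaussian.memLp_id γ 4 (by simp)).integrable_norm_pow (by simp)

lemma norm_sq_sum_smul_orthonormalBasis {E ι : Type*} [NormedAddCommGroup E]
    [InnerProductSpace ℝ E] [Fintype ι] (b : OrthonormalBasis ι ℝ E) (y : ι → ℝ) :
    ‖∑ i, y i • b i‖ ^ 2 = ∑ i, y i ^ 2 := by
  rw [b.sum_repr_symm (WithLp.toLp 2 y), LinearIsometryEquiv.norm_map,
    EuclideanSpace.real_norm_sq_eq]

lemma sqrt_mul_abs_sub_sqrt_le {r m : ℝ} (hr : 0 ≤ r) (hm : 0 ≤ m) :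
    √m * |r - √m| ≤ |r ^ 2 - m| := by
  calc √m * |r - √m| ≤ (r + √m) * |r - √m| := by gcongr; linarith
    _ = |(r + √m) * (r - √m)| := by rw [abs_mul, abs_of_nonneg (by positivity : 0 ≤ r + √m)]
    _ = |r ^ 2 - m| := by rw [← sq_sub_sq, Real.sq_sqrt hm]

variable (E : Type*) [NormedAddCommGroup E] [InnerProductSpace ℝ E] [FiniteDimensional ℝ E]
  [MeasurableSpace E] [BorelSpace E]

lemma integral_norm_sq_stdGaussian : ∫ x, ‖x‖ ^ 2 ∂(stdGaussian E) = finrank ℝ E := by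
  rw [stdGaussian, integral_map (Measurable.aemeasurable (by fun_prop)) (by fun_prop)]
  simp only [norm_sq_sum_smul_orthonormalBasis]
  rw [integral_finsetSum]
  · simp [integral_comp_eval (μ := fun _ ↦ gaussianReal 0 1) (f := fun y : ℝ ↦ y ^ 2)
      (by fun_prop), integral_sq_gaussianReal]
  · exact fun i _ ↦ integrable_comp_eval (μ := fun _ ↦ gaussianReal 0 1) (f := fun y : ℝ ↦ y ^ 2)
      IsGaussian.memLp_two_id.integrable_sq

lemma variance_norm_sq_stdGaussian :
    Var[fun x ↦ ‖x‖ ^ 2; stdGaussian E] = finrank ℝ E * Var[fun y ↦ y ^ 2; gaussianReal 0 1] := by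
  have hmem : MemLp (fun y : ℝ ↦ y ^ 2) 2 (gaussianReal 0 1) := by
    simpa using memLp_norm_sq_of_isGaussian (gaussianReal 0 1)
  rw [stdGaussian, variance_map (by fun_prop) (Measurable.aemeasurable (by fun_prop))]
  have hsum : (fun y : Fin (finrank ℝ E) → ℝ ↦ ‖∑ i, y i • stdOrthonormalBasis ℝ E i‖ ^ 2) =
      ∑ i, fun y ↦ y i ^ 2 := by
    ext y
    simp [norm_sq_sum_smul_orthonormalBasis]
  rw [Function.comp_def, hsum, variance_sum_pi fun _ ↦ hmem]
  simp

lemma integral_abs_norm_sq_sub_finrank_le :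
    ∫ x, |‖x‖ ^ 2 - finrank ℝ E| ∂(stdGaussian E) ≤
      √(finrank ℝ E * Var[fun y ↦ y ^ 2; gaussianReal 0 1]) := by
  rw [← variance_norm_sq_stdGaussian, variance_eq_integral (by fun_prop),
    integral_norm_sq_stdGaussian]
  exact integral_abs_le_sqrt_integral_sq
    ((memLp_norm_sq_of_isGaussian (stdGaussian E)).sub (memLp_const _))

lemma integral_abs_norm_sub_sqrt_finrank_le :
    ∫ x, |‖x‖ - √(finrank ℝ E)| ∂(stdGaussian E) ≤
      √Var[fun y ↦ y ^ 2; gaussianReal 0 1] := by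
  obtain _ | _ := subsingleton_or_nontrivial E
  · simp [norm_of_subsingleton, Module.finrank_zero_of_subsingleton]
  have hn : (0 : ℝ) < finrank ℝ E := Nat.cast_pos.mpr Module.finrank_pos
  have hint : Integrable (fun x ↦ |‖x‖ ^ 2 - finrank ℝ E|) (stdGaussian E) :=
    (((memLp_norm_sq_of_isGaussian _).integrable one_le_two).sub (integrable_const _)).abs
  refine le_of_mul_le_mul_left ?_ (Real.sqrt_pos.mpr hn)
  calc √(finrank ℝ E) * ∫ x, |‖x‖ - √(finrank ℝ E)| ∂(stdGaussian E)
      = ∫ x, √(finrank ℝ E) * |‖x‖ - √(finrank ℝ E)| ∂(stdGaussian E) :=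
        (integral_const_mul _ _).symm
    _ ≤ ∫ x, |‖x‖ ^ 2 - finrank ℝ E| ∂(stdGaussian E) :=
        integral_mono_of_nonneg (ae_of_all _ fun x ↦ by positivity) hint
          (ae_of_all _ fun x ↦ sqrt_mul_abs_sub_sqrt_le (norm_nonneg x) hn.le)
    _ ≤ √(finrank ℝ E) * √Var[fun y ↦ y ^ 2; gaussianReal 0 1] := by
        rw [← Real.sqrt_mul hn.le]
        exact integral_abs_norm_sq_sub_finrank_le E

end StdGaussian

section GaussianApproximation

variable {E : Type*} [NormedAddCommGroup E] [InnerProductSpace ℝ E] [FiniteDimensional ℝ E]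
  [MeasurableSpace E] [BorelSpace E] {μ : Measure E}

lemma integral_charFun_smul_stdGaussian [IsFiniteMeasure μ] (s : ℝ) :
    ∫ g, charFun μ (s • g) ∂(stdGaussian E) =
      ∫ x, Complex.exp (-(s ^ 2 * ‖x‖ ^ 2) / 2) ∂μ := by
  rw [integral_charFun_smul_comm]
  simp only [charFun_stdGaussian, norm_smul, Real.norm_eq_abs, Complex.ofReal_mul, mul_pow,
    ← Complex.ofReal_pow, sq_abs]

namespace IsRotationInvariant

theorem norm_charFun_sub_integral_exp_le [Nontrivial E] [IsProbabilityMeasure μ]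
    (hμ : IsRotationInvariant μ) (hmem : MemLp id 2 μ) (u : E) :
    ‖charFun μ u - ∫ x, Complex.exp (-(‖u‖ ^ 2 / finrank ℝ E * ‖x‖ ^ 2) / 2) ∂μ‖ ≤
      √(Var[fun y ↦ y ^ 2; gaussianReal 0 1] *
        (‖u‖ ^ 2 / finrank ℝ E * ∫ x, ‖x‖ ^ 2 ∂μ) / finrank ℝ E) := by
  set n := (finrank ℝ E : ℝ)
  set M := ∫ x, ‖x‖ ^ 2 ∂μ
  set V := Var[fun y ↦ y ^ 2; gaussianReal 0 1]
  have hn : 0 < n := Nat.cast_pos.mpr Module.finrank_pos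
  let s := ‖u‖ / √n
  have hs0 : 0 ≤ s := by positivity
  have hs : s ^ 2 = ‖u‖ ^ 2 / n := by rw [div_pow, Real.sq_sqrt hn.le]
  have hsub (g : E) : |‖u‖ - ‖s • g‖| = s * |‖g‖ - √n| := by
    have hu : ‖u‖ = s * √n := (div_mul_cancel₀ _ (by positivity)).symm
    rw [norm_smul, Real.norm_of_nonneg hs0, abs_sub_comm, hu, ← mul_sub, abs_mul,
      abs_of_nonneg hs0]
  have hcf : Integrable (fun g ↦ charFun μ (s • g)) (stdGaussian E) :=
    .of_bound (by fun_prop) 1 (ae_of_all _ fun g ↦ norm_charFun_le_one _)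
  have hdist : Integrable (fun g ↦ |‖g‖ - √n|) (stdGaussian E) :=
    (IsGaussian.integrable_id.norm.sub (integrable_const _)).abs
  calc ‖charFun μ u - ∫ x, Complex.exp (-(‖u‖ ^ 2 / n * ‖x‖ ^ 2) / 2) ∂μ‖
      = ‖∫ g, (charFun μ u - charFun μ (s • g)) ∂(stdGaussian E)‖ := by
        rw [integral_sub (integrable_const _) hcf, integral_charFun_smul_stdGaussian]
        simp only [integral_const, probReal_univ, one_smul, ← Complex.ofReal_pow, hs]
        simp
    _ ≤ ∫ g, s * |‖g‖ - √n| * √(M / n) ∂(stdGaussian E) := by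
        refine norm_integral_le_of_norm_le ((hdist.const_mul s).mul_const _)
          (ae_of_all _ fun g ↦ ?_)
        rw [← hsub]
        exact hμ.norm_charFun_sub_charFun_le hmem u (s • g)
    _ = s * (∫ g, |‖g‖ - √n| ∂(stdGaussian E)) * √(M / n) := by
        rw [integral_mul_const, integral_const_mul]
    _ ≤ s * √V * √(M / n) := by
        gcongr
        exact integral_abs_norm_sub_sqrt_finrank_le E
    _ = √(V * (‖u‖ ^ 2 / n * M) / n) := by
        have hV : 0 ≤ V := variance_nonneg _ _
        rw [← hs, show V * (s ^ 2 * M) / n = s ^ 2 * V * (M / n) by ring,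
          Real.sqrt_mul (by positivity), Real.sqrt_mul (by positivity), Real.sqrt_sq hs0]

theorem norm_charFun_sub_exp_le_of_norm_eq [Nontrivial E] [IsProbabilityMeasure μ]
    (hμ : IsRotationInvariant μ) {R : ℝ} (hR : ∀ᵐ x ∂μ, ‖x‖ = R) (u : E) :
    ‖charFun μ u - Complex.exp (-((‖u‖ ^ 2 * R ^ 2 / finrank ℝ E : ℝ) : ℂ) / 2)‖ ≤
      √(Var[fun y ↦ y ^ 2; gaussianReal 0 1] * (‖u‖ ^ 2 * R ^ 2 / finrank ℝ E) / finrank ℝ E) := by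
  have hmem : MemLp id 2 μ := .of_bound (by fun_prop) R (hR.mono fun x hx ↦ hx.le)
  have hsq : ∫ x, ‖x‖ ^ 2 ∂μ = R ^ 2 := by
    rw [integral_congr_ae (hR.mono fun x hx ↦ by simp only [hx]; rfl)]
    simp
  have hexp : ∫ x, Complex.exp (-(‖u‖ ^ 2 / finrank ℝ E * ‖x‖ ^ 2) / 2) ∂μ =
      Complex.exp (-((‖u‖ ^ 2 * R ^ 2 / finrank ℝ E : ℝ) : ℂ) / 2) := by
    rw [integral_congr_ae (hR.mono fun x hx ↦ by simp only [hx]; rfl)]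
    simp [div_mul_eq_mul_div]
  have h := hμ.norm_charFun_sub_integral_exp_le hmem u
  rwa [hexp, hsq, div_mul_eq_mul_div] at h

end IsRotationInvariant

end GaussianApproximation

section Limit

variable {Ω : Type*} [MeasurableSpace Ω] {P : Measure Ω} [IsProbabilityMeasure P] {Z : Ω → ℝ}
  {v : ℝ≥0} {R : ℕ → ℝ}

theorem tendstoInDistribution_inner_of_isRotationInvariant {E : ℕ → Type*}
    [∀ n, NormedAddCommGroup (E n)] [∀ n, InnerProductSpace ℝ (E n)]
    [∀ n, FiniteDimensional ℝ (E n)] [∀ n, MeasurableSpace (E n)] [∀ n, BorelSpace (E n)]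
    {σ : ∀ n, Measure (E n)} [∀ n, IsProbabilityMeasure (σ n)]
    (hZ : HasLaw Z (gaussianReal 0 v) P) (hσ : ∀ n, IsRotationInvariant (σ n))
    (hR : ∀ n, ∀ᵐ x ∂σ n, ‖x‖ = R n) {u : ∀ n, E n}
    (hdim : Tendsto (fun n ↦ finrank ℝ (E n)) atTop atTop)
    (hu : Tendsto (fun n ↦ ‖u n‖ ^ 2 * R n ^ 2 / finrank ℝ (E n)) atTop (𝓝 v)) :
    TendstoInDistribution (fun n x ↦ ⟪u n, x⟫) atTop Z σ P where
  forall_aemeasurable n := by fun_prop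
  aemeasurable_limit := hZ.aemeasurable
  tendsto := by
    refine ProbabilityMeasure.tendsto_iff_tendsto_charFun.2 fun t ↦ ?_
    rw! [hZ.map_eq]
    simp only [ProbabilityMeasure.coe_mk, charFun_map_inner, charFun_gaussianReal]
    have htu : Tendsto (fun n ↦ ‖t • u n‖ ^ 2 * R n ^ 2 / finrank ℝ (E n)) atTop
        (𝓝 (t ^ 2 * v)) := by
      refine (hu.const_mul (t ^ 2)).congr fun n ↦ ?_
      rw [norm_smul, mul_pow, Real.norm_eq_abs, sq_abs]
      ring
    have herr := ((htu.const_mul Var[fun y ↦ y ^ 2; gaussianReal 0 1]).div_atTop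
      (tendsto_natCast_atTop_atTop.comp hdim)).sqrt
    have hexp := ((Complex.continuous_ofReal.tendsto _).comp htu).neg.div_const 2 |>.cexp
    rw [Real.sqrt_zero] at herr
    have hclose := squeeze_zero_norm' ((hdim.eventually_gt_atTop 0).mono fun n hn ↦
      have := Module.nontrivial_of_finrank_pos hn
      (hσ n).norm_charFun_sub_exp_le_of_norm_eq (hR n) (t • u n)) herr
    convert! hclose.add hexp using 2
    · simp
    · push_cast
      ring_nf

theorem tendstoInDistribution_sum_coord_of_isRotationInvariant {ι : ℕ → Type*}
    [∀ n, Fintype (ι n)] {σ : ∀ n, Measure (EuclideanSpace ℝ (ι n))}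
    [∀ n, IsProbabilityMeasure (σ n)] (hZ : HasLaw Z (gaussianReal 0 v) P)
    (hσ : ∀ n, IsRotationInvariant (σ n)) (hR : ∀ n, ∀ᵐ x ∂σ n, ‖x‖ = R n)
    {s : ∀ n, Finset (ι n)} (hdim : Tendsto (fun n ↦ Fintype.card (ι n)) atTop atTop)
    (hs : Tendsto (fun n ↦ (s n).card * R n ^ 2 / Fintype.card (ι n)) atTop (𝓝 v)) :
    TendstoInDistribution (fun n x ↦ ∑ i ∈ s n, x i) atTop Z σ P := by
  classical
  let u (n : ℕ) : EuclideanSpace ℝ (ι n) := WithLp.toLp 2 fun i ↦ if i ∈ s n then 1 else 0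
  have hinner (n : ℕ) (x : EuclideanSpace ℝ (ι n)) : ⟪u n, x⟫ = ∑ i ∈ s n, x i := by
    simp [u, PiLp.inner_apply]
  have hnorm (n : ℕ) : ‖u n‖ ^ 2 = (s n).card := by
    simp [u, EuclideanSpace.real_norm_sq_eq]
  simpa only [hinner] using tendstoInDistribution_inner_of_isRotationInvariant hZ hσ hR (u := u)
    (by simpa using hdim) (by simpa [hnorm] using hs)

end Limit

lemma tendsto_card_filter_val_lt_floor_div {a : ℝ} (ha : a ∈ Set.Icc (0 : ℝ) 1) :
    Tendsto (fun n : ℕ ↦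
      ((Finset.univ.filter fun i : Fin n ↦ (i : ℕ) < ⌊(n : ℝ) * a⌋₊).card : ℝ) / n)
      atTop (𝓝 a) := by
  refine ((tendsto_nat_floor_mul_div_atTop ha.1).comp
    (tendsto_natCast_atTop_atTop (R := ℝ))).congr fun n ↦ ?_
  have hle : ⌊(n : ℝ) * a⌋₊ ≤ n :=
    Nat.floor_le_of_le (mul_le_of_le_one_right n.cast_nonneg ha.2)
  rw [Fin.card_filter_val_lt, min_eq_right hle, Function.comp_apply, mul_comm a]

end LevySphere

/-- Wiener's 1923 "differential space" result: if `σ n` is the uniform (normalized surface)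
probability measure on the sphere of radius `R` in `ℝⁿ` (characterized as the unique
rotation-invariant probability measure carried by the sphere), and
`Sₙ(x) = x₁ + ⋯ + x_{⌊na⌋}`, then the pushforward measures `(Sₙ)_* σₙ` converge weakly to
the Gaussian measure on `ℝ` with mean `0` and variance `a·R²`. -/
theorem levy_sphere_partial_sums_to_gaussian (R a : ℝ) (hR : 0 < R)
    (ha : a ∈ Set.Ioc (0:ℝ) 1)
    (σ : ∀ n : ℕ, Measure (EuclideanSpace ℝ (Fin n)))
    (hprob : ∀ n, 1 ≤ n → IsProbabilityMeasure (σ n))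
    (hsphere : ∀ n, 1 ≤ n → σ n (Metric.sphere (0 : EuclideanSpace ℝ (Fin n)) R)ᶜ = 0)
    (hrot : ∀ n, 1 ≤ n → ∀ O : EuclideanSpace ℝ (Fin n) ≃ₗᵢ[ℝ] EuclideanSpace ℝ (Fin n),
      Measure.map O (σ n) = σ n)
    (S : ∀ n : ℕ, EuclideanSpace ℝ (Fin n) → ℝ)
    (hS : ∀ n (x : EuclideanSpace ℝ (Fin n)),
      S n x = ∑ i ∈ Finset.univ.filter (fun i : Fin n => (i : ℕ) < ⌊(n : ℝ) * a⌋₊), x i) :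
    ∀ g : BoundedContinuousFunction ℝ ℝ,
      Tendsto (fun n : ℕ => ∫ y, g y ∂((σ n).map (S n))) atTop
        (nhds (∫ y, g y ∂(gaussianReal 0 (Real.toNNReal (a * R ^ 2))))) := by
  intro g
  have (n : ℕ) : IsProbabilityMeasure (σ (n + 1)) := hprob (n + 1) n.succ_pos
  have hnorm (n : ℕ) : ∀ᵐ x ∂σ (n + 1), ‖x‖ = R := by
    filter_upwards [mem_ae_iff.mpr (hsphere (n + 1) n.succ_pos)] with x hx
    exact mem_sphere_zero_iff_norm.mp hx
  have hfrac := (tendsto_add_atTop_iff_nat 1).mpr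
    (LevySphere.tendsto_card_filter_val_lt_floor_div (Set.Ioc_subset_Icc_self ha))
  have hlim := LevySphere.tendstoInDistribution_sum_coord_of_isRotationInvariant
    (HasLaw.id (μ := gaussianReal 0 (a * R ^ 2).toNNReal))
    (fun n ↦ hrot (n + 1) n.succ_pos) hnorm
    (s := fun n ↦ Finset.univ.filter fun i : Fin (n + 1) ↦ (i : ℕ) < ⌊((n + 1 : ℕ) : ℝ) * a⌋₊)
    (by simpa using tendsto_add_atTop_nat 1)
    (by
      rw [Real.coe_toNNReal _ (mul_nonneg ha.1.le (sq_nonneg R))]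
      simpa [div_mul_eq_mul_div] using hfrac.mul_const (R ^ 2))
  rw [← tendsto_add_atTop_iff_nat 1]
  have hS_eq (n : ℕ) := funext (hS (n + 1))
  simpa [hS_eq] using ProbabilityMeasure.tendsto_iff_forall_integral_tendsto.mp hlim.tendsto g
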